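/- Let γ : ℝ → ℝ² and l : ℝ → ℝ be smooth 2π-periodic functions with |γ'(t)| > 0 for all t, and set Γ(t) = γ(t) + l(t)·γ'(t)/|γ'(t)|. Then (1/2)∫₀^{2π} det(Γ(t), Γ'(t)) dt − (1/2)∫₀^{2π} det(γ(t), γ'(t)) dt = (1/2)∫₀^{2π} (l(t)²/|γ'(t)|²)·det(γ'(t), γ''(t)) dt. -/

import Mathlib

open MeasureTheory Real

noncomputable section

/-- `det(a,b) = a₁b₂ − a₂b₁` for vectors of the Euclidean plane. -/
def det2 (a b : EuclideanSpace ℝ (Fin 2)) : ℝ := a 0 * b 1 - a 1 * b 0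

/-- If `γ : ℝ → ℝ²` and `l : ℝ → ℝ` are smooth `2π`-periodic functions with
`|γ'| > 0`, and `Γ = γ + l·γ'/|γ'|`, then
`½∫₀^{2π} det(Γ,Γ') − ½∫₀^{2π} det(γ,γ') = ½∫₀^{2π} (l²/|γ'|²)·det(γ',γ'')`. -/
theorem area_of_offset_curve (γ : ℝ → EuclideanSpace ℝ (Fin 2)) (l : ℝ → ℝ)
    (hγ : ContDiff ℝ (⊤ : ℕ∞) γ) (hl : ContDiff ℝ (⊤ : ℕ∞) l)
    (hγper : Function.Periodic γ (2 * π)) (hlper : Function.Periodic l (2 * π))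
    (hγ' : ∀ t, ‖deriv γ t‖ > 0)
    (Γ : ℝ → EuclideanSpace ℝ (Fin 2))
    (hΓ : Γ = fun t => γ t + (l t / ‖deriv γ t‖) • deriv γ t) :
    (1 / 2) * (∫ t in (0 : ℝ)..(2 * π), det2 (Γ t) (deriv Γ t)) -
      (1 / 2) * (∫ t in (0 : ℝ)..(2 * π), det2 (γ t) (deriv γ t)) =
    (1 / 2) * (∫ t in (0 : ℝ)..(2 * π),
      (l t ^ 2 / ‖deriv γ t‖ ^ 2) * det2 (deriv γ t) (deriv (deriv γ) t)) := by
  have hγd : ContDiff ℝ (⊤ : ℕ∞) (deriv γ) := (contDiff_infty_iff_deriv.1 hγ).2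
  have hγdd : ContDiff ℝ (⊤ : ℕ∞) (deriv (deriv γ)) := (contDiff_infty_iff_deriv.1 hγd).2
  have hne : ∀ t, deriv γ t ≠ 0 := fun t => norm_pos_iff.1 (hγ' t)
  have hnne : ∀ t, ‖deriv γ t‖ ≠ 0 := fun t => (hγ' t).ne'
  obtain ⟨m, hm⟩ : ∃ m : ℝ → ℝ, m = fun t => l t / ‖deriv γ t‖ := ⟨_, rfl⟩
  have hmc : ContDiff ℝ (⊤ : ℕ∞) m := by
    rw [hm]; exact hl.div (hγd.norm ℝ hne) hnne
  have hmd : ContDiff ℝ (⊤ : ℕ∞) (deriv m) := (contDiff_infty_iff_deriv.1 hmc).2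
  have hD : ∀ t, HasDerivAt γ (deriv γ t) t := fun t =>
    ((hγ.differentiable (by simp)) t).hasDerivAt
  have hDD : ∀ t, HasDerivAt (deriv γ) (deriv (deriv γ) t) t := fun t =>
    ((hγd.differentiable (by simp)) t).hasDerivAt
  have hM : ∀ t, HasDerivAt m (deriv m t) t := fun t =>
    ((hmc.differentiable (by simp)) t).hasDerivAt
  have hG : ∀ t, Γ t = γ t + m t • deriv γ t := by
    intro t; rw [hΓ, hm]
  have hGd : ∀ t, deriv Γ t = deriv γ t + (m t • deriv (deriv γ) t + deriv m t • deriv γ t) := by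
    intro t
    rw [show Γ = fun t => γ t + m t • deriv γ t from funext hG]
    exact ((hD t).add ((hM t).smul (hDD t))).deriv
  have hc : ∀ (f : ℝ → EuclideanSpace ℝ (Fin 2)) (f' : EuclideanSpace ℝ (Fin 2)) (t : ℝ) (i : Fin 2),
      HasDerivAt f f' t → HasDerivAt (fun s => f s i) (f' i) t := by
    intro f f' t i h
    exact (EuclideanSpace.proj (𝕜 := ℝ) i : EuclideanSpace ℝ (Fin 2) →L[ℝ] ℝ).hasFDerivAt.comp_hasDerivAt t h
  have hcont : ∀ f g : ℝ → EuclideanSpace ℝ (Fin 2), Continuous f → Continuous g →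
      Continuous fun t => det2 (f t) (g t) := by
    intro f g hf hg
    unfold det2
    fun_prop
  have hγper' : deriv γ (2 * π) = deriv γ 0 := by
    have h : (fun t => γ (t + 2 * π)) = γ := funext hγper
    have h2 := deriv_comp_add_const γ (2 * π) 0
    rw [h, zero_add] at h2
    exact h2.symm
  have hFTC : ∫ t in (0 : ℝ)..(2 * π),
      (deriv m t * det2 (γ t) (deriv γ t) + m t * det2 (γ t) (deriv (deriv γ) t)) = 0 := by
    rw [intervalIntegral.integral_eq_sub_of_hasDerivAt
      (f := fun t => m t * det2 (γ t) (deriv γ t))]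
    · have h1 := hγper 0
      have h2 := hlper 0
      rw [zero_add] at h1 h2
      simp only [hm, h1, h2, hγper', sub_self]
    · intro t _
      have h0 := hc _ _ t 0 (hD t)
      have h1 := hc _ _ t 1 (hD t)
      have h0' := hc _ _ t 0 (hDD t)
      have h1' := hc _ _ t 1 (hDD t)
      have := (hM t).mul ((h0.mul h1').sub (h1.mul h0'))
      refine this.congr_deriv ?_
      simp only [det2, Pi.mul_apply, Pi.sub_apply]
      ring
    · exact ((hmd.continuous.mul (hcont _ _ hγ.continuous hγd.continuous)).add
        (hmc.continuous.mul (hcont _ _ hγ.continuous hγdd.continuous))).intervalIntegrable _ _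
  have hpt : ∀ t, det2 (Γ t) (deriv Γ t) = det2 (γ t) (deriv γ t) +
      (deriv m t * det2 (γ t) (deriv γ t) + m t * det2 (γ t) (deriv (deriv γ) t)) +
      m t ^ 2 * det2 (deriv γ t) (deriv (deriv γ) t) := by
    intro t
    rw [hG, hGd]
    simp only [det2, PiLp.add_apply, PiLp.smul_apply, smul_eq_mul]
    ring
  have hr : ∀ t, l t ^ 2 / ‖deriv γ t‖ ^ 2 = m t ^ 2 := by
    intro t; rw [hm, div_pow]
  have i1 : IntervalIntegrable (fun t => det2 (γ t) (deriv γ t)) volume 0 (2 * π) :=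
    (hcont _ _ hγ.continuous hγd.continuous).intervalIntegrable _ _
  have i2 : IntervalIntegrable (fun t => deriv m t * det2 (γ t) (deriv γ t) +
      m t * det2 (γ t) (deriv (deriv γ) t)) volume 0 (2 * π) :=
    ((hmd.continuous.mul (hcont _ _ hγ.continuous hγd.continuous)).add
        (hmc.continuous.mul (hcont _ _ hγ.continuous hγdd.continuous))).intervalIntegrable _ _
  have i3 : IntervalIntegrable (fun t => m t ^ 2 * det2 (deriv γ t) (deriv (deriv γ) t))
      volume 0 (2 * π) :=
    ((hmc.continuous.pow 2).mul (hcont _ _ hγd.continuous hγdd.continuous)).intervalIntegrable _ _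
  simp only [hpt, hr]
  rw [intervalIntegral.integral_add (i1.add i2) i3, intervalIntegral.integral_add i1 i2, hFTC]
  ring
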